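/- arXiv:1912.07528 — 3 statements merged into one kernel-verified Lean document; each statement's English description precedes it below -/
import Mathlib

section
/- (Claim 2) Let a ∈ {1,...,K−1}, b = a+1, and suppose q_a ≤ 1 < q_b. Fix j ≥ b with q_j > 1. Then among the intersection points p(i,j) for i ∈ {1,...,a}, the LP objective f is maximized at i = a: for every i with 1 ≤ i ≤ a, f(p(a,j)) ≥ f(p(i,j)). -/
/-- Transmission cost per placement of a type-`t` subfile: `c_t = ρ·t^α`. -/
noncomputable def cCost (ρ α : ℝ) (t : ℕ) : ℝ := ρ * (t : ℝ) ^ α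

/-- `q_t = (N·c_t·(t+1) + t·(K+1)) / (K·(t+1))`. -/
noncomputable def q (K N : ℕ) (ρ α : ℝ) (t : ℕ) : ℝ :=
  ((N : ℝ) * cCost ρ α t * ((t : ℝ) + 1) + (t : ℝ) * ((K : ℝ) + 1)) /
    ((K : ℝ) * ((t : ℝ) + 1))

/-- Feasibility for the caching LP: `Σ_{t=1}^K q_t·y_t ≤ 1`, `Σ_{t=1}^K y_t ≤ 1`,
and `y_t ≥ 0` for all `t ∈ {1,…,K}`. -/
def Feasible (K N : ℕ) (ρ α : ℝ) (y : ℕ → ℝ) : Prop :=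
  (∑ t ∈ Finset.Icc 1 K, q K N ρ α t * y t ≤ 1) ∧
  (∑ t ∈ Finset.Icc 1 K, y t ≤ 1) ∧
  (∀ t ∈ Finset.Icc 1 K, 0 ≤ y t)

/-- The caching LP objective `f(y) = Σ_{t=1}^K (t/(t+1))·y_t`. -/
noncomputable def objF (K : ℕ) (y : ℕ → ℝ) : ℝ :=
  ∑ t ∈ Finset.Icc 1 K, ((t : ℝ) / ((t : ℝ) + 1)) * y t

/-- The intersection point `p(i,j)`: `y_i = (q_j − 1)/(q_j − q_i)`,
`y_j = (1 − q_i)/(q_j − q_i)`, and `y_t = 0` otherwise. -/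
noncomputable def pInter (K N : ℕ) (ρ α : ℝ) (i j : ℕ) : ℕ → ℝ := fun t =>
  if t = i then (q K N ρ α j - 1) / (q K N ρ α j - q K N ρ α i)
  else if t = j then (1 - q K N ρ α i) / (q K N ρ α j - q K N ρ α i)
  else 0

/-!
Put `u_t = t / (t + 1)`. The two weights of `p(i,j)` sum to `1` and satisfy `Σ_t q_t y_t = 1`, so
`f(p(i,j))` is the abscissa at which the line through `(u_i, q_i)` and `(u_j, q_j)` has height `1`.
The points `(u_t, q_t)` lie on an increasing curve which is convex for `u ≥ 1 / 2`, that is, for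
`t ≥ 1`: since `t = u / (1 - u)`, this comes down to the convexity of `log (u / (1 - u))` there.
Hence the chord ending at `(u_j, q_j)` gets steeper as `i` grows, and the abscissa moves right.
-/

open Set

section OrderedField

variable {𝕜 : Type*} [Field 𝕜] [LinearOrder 𝕜] [IsStrictOrderedRing 𝕜]

/-- The abscissa at which the line through `(x, g x)` and `(z, g z)` has height `c`, with the junk
value `z` if that line is horizontal. -/
def chordCrossing (g : 𝕜 → 𝕜) (c x z : 𝕜) : 𝕜 := z - (g z - c) / slope g x z

lemma chordCrossing_le_chordCrossing {s : Set 𝕜} {g : 𝕜 → 𝕜} {c x y z : 𝕜}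
    (hconv : ConvexOn 𝕜 s g) (hmono : StrictMonoOn g s)
    (hx : x ∈ s) (hy : y ∈ s) (hz : z ∈ s) (hxy : x ≤ y) (hyz : y < z) (hc : c ≤ g z) :
    chordCrossing g c x z ≤ chordCrossing g c y z := by
  have hxz : x < z := hxy.trans_lt hyz
  have hslope : slope g x z ≤ slope g y z := by
    rw [slope_comm g x, slope_comm g y]
    exact hconv.slope_mono hz ⟨hx, hxz.ne⟩ ⟨hy, hyz.ne⟩ hxy
  exact sub_le_sub_left
    (div_le_div_of_nonneg_left (sub_nonneg.2 hc) (hmono.slope_pos hx hz hxz.ne) hslope) z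

lemma monotoneOn_div_one_sub : MonotoneOn (fun u : 𝕜 ↦ u / (1 - u)) (Iio 1) := by
  intro u hu v hv huv
  rw [mem_Iio] at hu hv
  change u / (1 - u) ≤ v / (1 - v)
  rw [div_le_div_iff₀ (sub_pos.2 hu) (sub_pos.2 hv)]
  linarith

end OrderedField

lemma convexOn_rpow_of_convexOn_log {E : Type*} [AddCommGroup E] [Module ℝ E] {s : Set E}
    {f : E → ℝ} {α : ℝ} (hf : ∀ x ∈ s, 0 < f x) (hlog : ConvexOn ℝ s fun x ↦ Real.log (f x))
    (hα : 0 ≤ α) : ConvexOn ℝ s fun x ↦ f x ^ α := by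
  have hexp : ConvexOn ℝ s fun x ↦ Real.exp (α • Real.log (f x)) :=
    ⟨hlog.1, fun x hx y hy a b ha hb hab ↦
      (Real.exp_monotone ((hlog.smul hα).2 hx hy ha hb hab)).trans
        (convexOn_exp.2 (mem_univ _) (mem_univ _) ha hb hab)⟩
  refine hexp.congr fun x hx ↦ ?_
  simp only [Real.rpow_def_of_pos (hf x hx), smul_eq_mul, mul_comm]

lemma hasDerivAt_log_div_one_sub {x : ℝ} (hx : x ∈ Ioo 0 1) :
    HasDerivAt (fun u ↦ Real.log (u / (1 - u))) (1 / (x * (1 - x))) x := by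
  have hx₀ : x ≠ 0 := hx.1.ne'
  have hx₁ : 1 - x ≠ 0 := (sub_pos.2 hx.2).ne'
  convert! ((hasDerivAt_id x).div ((hasDerivAt_id x).const_sub 1) hx₁).log
    (div_ne_zero hx₀ hx₁) using 1
  simp only [id, Pi.div_apply]
  field_simp
  ring

lemma convexOn_log_div_one_sub : ConvexOn ℝ (Ico (1 / 2) 1) fun u ↦ Real.log (u / (1 - u)) := by
  have hderiv : ∀ u ∈ Ico (1 / 2 : ℝ) 1,
      HasDerivAt (fun u ↦ Real.log (u / (1 - u))) (1 / (u * (1 - u))) u := fun u hu ↦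
    hasDerivAt_log_div_one_sub ⟨one_half_pos.trans_le hu.1, hu.2⟩
  refine MonotoneOn.convexOn_of_deriv (convex_Ico _ _)
    (fun u hu ↦ (hderiv u hu).continuousAt.continuousWithinAt)
    (fun u hu ↦ (hderiv u (interior_subset hu)).differentiableAt.differentiableWithinAt) ?_
  intro u hu v hv huv
  replace hu := interior_subset hu
  replace hv := interior_subset hv
  rw [(hderiv u hu).deriv, (hderiv v hv).deriv]
  have hv₀ : 0 < v * (1 - v) := mul_pos (one_half_pos.trans_le hv.1) (sub_pos.2 hv.2)
  have hmul : v * (1 - v) ≤ u * (1 - u) := by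
    nlinarith [mul_nonneg (sub_nonneg.2 huv) (add_nonneg (sub_nonneg.2 hu.1) (sub_nonneg.2 hv.1))]
  exact one_div_le_one_div_of_le hv₀ hmul

/-- The coefficient `u_t = t / (t + 1)` of `y_t` in the objective `objF`. -/
noncomputable def gain (t : ℕ) : ℝ := (t : ℝ) / ((t : ℝ) + 1)

lemma gain_eq_one_sub (t : ℕ) : gain t = 1 - 1 / ((t : ℝ) + 1) := by
  unfold gain
  field_simp
  ring

lemma gain_strictMono : StrictMono gain := fun s t hst ↦ by
  rw [gain_eq_one_sub, gain_eq_one_sub]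
  gcongr

lemma gain_nonneg (t : ℕ) : 0 ≤ gain t := div_nonneg t.cast_nonneg (by positivity)

lemma gain_lt_one (t : ℕ) : gain t < 1 := by
  rw [gain_eq_one_sub]
  exact sub_lt_self 1 (by positivity)

lemma one_half_le_gain {t : ℕ} (ht : 1 ≤ t) : 1 / 2 ≤ gain t := by
  simpa [gain, one_add_one_eq_two] using gain_strictMono.monotone ht

lemma gain_div_one_sub_gain (t : ℕ) : gain t / (1 - gain t) = t := by
  rw [gain_eq_one_sub]
  field_simp
  ring

/-- The curve `u ↦ (N ρ / K) (u / (1 - u)) ^ α + ((K + 1) / K) u` through the points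
`(gain t, q K N ρ α t)`; the inverse of `t ↦ t / (t + 1)` is `u ↦ u / (1 - u)`. -/
noncomputable def loadCurve (K N : ℕ) (ρ α u : ℝ) : ℝ :=
  N * ρ / K * (u / (1 - u)) ^ α + (K + 1) / K * u

section LoadCurve

variable {K : ℕ} (N : ℕ) {ρ α : ℝ}

lemma loadCurve_gain (hK : K ≠ 0) (ρ α : ℝ) (t : ℕ) :
    loadCurve K N ρ α (gain t) = q K N ρ α t := by
  rw [loadCurve, gain_div_one_sub_gain]
  unfold q cCost gain
  field_simp

lemma convexOn_loadCurve (hα : 0 ≤ α) (hρ : 0 ≤ ρ) :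
    ConvexOn ℝ (Ico (1 / 2) 1) (loadCurve K N ρ α) := by
  have hpow : ConvexOn ℝ (Ico (1 / 2) 1) fun u : ℝ ↦ (u / (1 - u)) ^ α :=
    convexOn_rpow_of_convexOn_log
      (fun u hu ↦ div_pos (one_half_pos.trans_le hu.1) (sub_pos.2 hu.2))
      convexOn_log_div_one_sub hα
  have hlin : ConvexOn ℝ (Ico (1 / 2) 1) fun u : ℝ ↦ u := convexOn_id (convex_Ico _ _)
  exact (hpow.smul (c := N * ρ / K) (by positivity)).add
    (hlin.smul (c := ((K : ℝ) + 1) / K) (by positivity))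

lemma strictMonoOn_loadCurve (hK : K ≠ 0) (hα : 0 ≤ α) (hρ : 0 ≤ ρ) :
    StrictMonoOn (loadCurve K N ρ α) (Ico 0 1) := by
  intro u hu v hv huv
  have hodds : u / (1 - u) ≤ v / (1 - v) := monotoneOn_div_one_sub hu.2 hv.2 huv.le
  have hpow : (u / (1 - u)) ^ α ≤ (v / (1 - v)) ^ α :=
    Real.rpow_le_rpow (div_nonneg hu.1 (sub_nonneg.2 hu.2.le)) hodds hα
  exact add_lt_add_of_le_of_lt (mul_le_mul_of_nonneg_left hpow (by positivity))
    (mul_lt_mul_of_pos_left huv (by positivity))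

lemma q_strictMono (hK : K ≠ 0) (hα : 0 ≤ α) (hρ : 0 ≤ ρ) : StrictMono (q K N ρ α) :=
  fun s t hst ↦ by
    rw [← loadCurve_gain N hK, ← loadCurve_gain N hK]
    exact strictMonoOn_loadCurve N hK hα hρ ⟨gain_nonneg s, gain_lt_one s⟩
      ⟨gain_nonneg t, gain_lt_one t⟩ (gain_strictMono hst)

end LoadCurve

lemma objF_pInter (K N : ℕ) (ρ α : ℝ) {i j : ℕ} (hi : i ∈ Finset.Icc 1 K)
    (hj : j ∈ Finset.Icc 1 K) (hij : i ≠ j) :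
    objF K (pInter K N ρ α i j) =
      gain i * ((q K N ρ α j - 1) / (q K N ρ α j - q K N ρ α i)) +
        gain j * ((1 - q K N ρ α i) / (q K N ρ α j - q K N ρ α i)) := by
  unfold objF
  rw [Finset.sum_eq_add_of_mem i j hi hj hij fun t _ ht ↦ by simp [pInter, ht.1, ht.2]]
  simp only [pInter, gain, if_true, if_neg hij.symm]

lemma objF_pInter_eq_chordCrossing (K N : ℕ) {ρ α : ℝ} {i j : ℕ} (hi : i ∈ Finset.Icc 1 K)
    (hj : j ∈ Finset.Icc 1 K) (hq : q K N ρ α i ≠ q K N ρ α j) :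
    objF K (pInter K N ρ α i j) = chordCrossing (loadCurve K N ρ α) 1 (gain i) (gain j) := by
  have hij : i ≠ j := fun h ↦ hq (congrArg _ h)
  have hK : K ≠ 0 := by
    rw [Finset.mem_Icc] at hi
    lia
  rw [objF_pInter K N ρ α hi hj hij, chordCrossing, slope_def_field, loadCurve_gain N hK,
    loadCurve_gain N hK]
  have hq' : q K N ρ α j - q K N ρ α i ≠ 0 := sub_ne_zero.2 hq.symm
  field_simp
  ring

theorem claim2_intersection_maximized_at_a_general (K N : ℕ) {α ρ : ℝ} (hα : 0 ≤ α) (hρ : 0 ≤ ρ)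
    {i a j : ℕ} (hi : 1 ≤ i) (hia : i ≤ a) (haj : a < j) (hjK : j ≤ K) (hqj : 1 ≤ q K N ρ α j) :
    objF K (pInter K N ρ α i j) ≤ objF K (pInter K N ρ α a j) := by
  have hK : K ≠ 0 := by lia
  have ha : 1 ≤ a := hi.trans hia
  have hgain : ∀ t, 1 ≤ t → gain t ∈ Ico (1 / 2) 1 := fun t ht ↦
    ⟨one_half_le_gain ht, gain_lt_one t⟩
  have hmono : StrictMonoOn (loadCurve K N ρ α) (Ico (1 / 2) 1) :=
    (strictMonoOn_loadCurve N hK hα hρ).mono (Ico_subset_Ico_left one_half_pos.le)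
  have hcross : ∀ t, 1 ≤ t → t < j → objF K (pInter K N ρ α t j) =
      chordCrossing (loadCurve K N ρ α) 1 (gain t) (gain j) := fun t ht htj ↦
    objF_pInter_eq_chordCrossing K N (Finset.mem_Icc.2 ⟨ht, htj.le.trans hjK⟩)
      (Finset.mem_Icc.2 ⟨ht.trans htj.le, hjK⟩) (q_strictMono N hK hα hρ htj).ne
  rw [hcross i hi (hia.trans_lt haj), hcross a ha haj]
  exact chordCrossing_le_chordCrossing (convexOn_loadCurve N hα hρ) hmono
    (hgain i hi) (hgain a ha) (hgain j (ha.trans haj.le)) (gain_strictMono.monotone hia)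
    (gain_strictMono haj) (hqj.trans_eq (loadCurve_gain N hK ρ α j).symm)

theorem claim2_intersection_maximized_at_a
    (K N : ℕ) (hK : 2 ≤ K) (hKN : K ≤ N) (α ρ : ℝ)
    (hα0 : 0 ≤ α) (hα1 : α ≤ 1) (hρ0 : 0 ≤ ρ) (hρ1 : ρ ≤ 1)
    (a : ℕ) (ha : 1 ≤ a) (haK : a + 1 ≤ K)
    (hqa : q K N ρ α a ≤ 1) (hqb : 1 < q K N ρ α (a + 1))
    (j : ℕ) (hj : a + 1 ≤ j) (hjK : j ≤ K) (hqj : 1 < q K N ρ α j) :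
    ∀ i : ℕ, 1 ≤ i → i ≤ a →
      objF K (pInter K N ρ α i j) ≤ objF K (pInter K N ρ α a j) :=
  fun _ hi hia ↦ claim2_intersection_maximized_at_a_general K N hα0 hρ0 hi hia hj hjK hqj.le
end

section
/- (Architecture limited regime optimality, intersection case) Let a ∈ {1,...,K−1} and suppose γ_{a+1} < ρ ≤ γ_a (equivalently q_a ≤ 1 < q_{a+1}) and α ≥ σ_a. Then the intersection point p(a,a+1), with coordinates y_a = (q_{a+1} − 1)/(q_{a+1} − q_a), y_{a+1} = (1 − q_a)/(q_{a+1} − q_a), and all other coordinates zero, is an optimal solution of the caching LP. -/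
/-- `γ_t = (K−t)/(t^α·(t+1)·N)`. -/
noncomputable def gam (K N : ℕ) (α : ℝ) (t : ℕ) : ℝ :=
  ((K : ℝ) - (t : ℝ)) / ((t : ℝ) ^ α * ((t : ℝ) + 1) * (N : ℝ))

/-- `σ_t = 1 + log((t+1)/(t+2)) / log((t+1)/t)` for `1 ≤ t ≤ K−1`, with the
conventions `σ_0 = 1` and `σ_K = 0`. -/
noncomputable def sigmaK (K t : ℕ) : ℝ :=
  if t = 0 then 1
  else if t = K then 0
  else 1 + Real.log (((t : ℝ) + 1) / ((t : ℝ) + 2)) / Real.log (((t : ℝ) + 1) / (t : ℝ))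

/-!
The two constraints of the LP have a dual with two variables `l, m ≥ 0`, subject to
`w_t ≤ l q_t + m` for all `t`, where `w_t = t / (t + 1)`. Complementary slackness forces the affine
function `x ↦ l x + m` to interpolate the points `(q_t, w_t)` at `t = a` and `t = a + 1`. Dual
feasibility at the other `t` is a convexity statement: since `t = w_t / (1 - w_t)`, the points
`(w_t, q_t)` lie on the graph of `u ↦ A (u / (1 - u)) ^ α + B u` with `A, B ≥ 0`, which is convex
for `1 / 2 ≤ u < 1` because the log-odds are. In the sign of the intercept `m` the contributions of
`B u` cancel, and `σ_a ≤ α` is what makes the remaining one, from `t ^ α`, nonnegative.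
-/

section DualityAndChords

theorem sum_mul_le_of_le_mul_add {ι R : Type*} [CommSemiring R] [PartialOrder R] [IsOrderedRing R]
    {s : Finset ι} {w q y : ι → R} {b c l m : R} (hl : 0 ≤ l) (hm : 0 ≤ m)
    (hdual : ∀ t ∈ s, w t ≤ l * q t + m) (hy : ∀ t ∈ s, 0 ≤ y t)
    (hqy : ∑ t ∈ s, q t * y t ≤ b) (hsum : ∑ t ∈ s, y t ≤ c) :
    ∑ t ∈ s, w t * y t ≤ l * b + m * c :=
  calc ∑ t ∈ s, w t * y t
      ≤ ∑ t ∈ s, (l * q t + m) * y t :=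
        Finset.sum_le_sum fun t ht => mul_le_mul_of_nonneg_right (hdual t ht) (hy t ht)
    _ = l * ∑ t ∈ s, q t * y t + m * ∑ t ∈ s, y t := by
        simp only [add_mul, mul_assoc, Finset.sum_add_distrib, Finset.mul_sum]
    _ ≤ l * b + m * c := by gcongr

variable {𝕜 : Type*} [Field 𝕜] [LinearOrder 𝕜] [IsStrictOrderedRing 𝕜]

theorem sum_mul_le_of_chord_le {ι : Type*} {s : Finset ι} {w q y : ι → 𝕜} {b c : 𝕜} {i j : ι}
    (hq : q i < q j) (hw : w i ≤ w j) (hintercept : w j * q i ≤ w i * q j)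
    (hchord : ∀ t ∈ s, (q j - q i) * (w t - w i) ≤ (q t - q i) * (w j - w i))
    (hy : ∀ t ∈ s, 0 ≤ y t) (hqy : ∑ t ∈ s, q t * y t ≤ b) (hsum : ∑ t ∈ s, y t ≤ c) :
    ∑ t ∈ s, w t * y t ≤
      w i * ((c * q j - b) / (q j - q i)) + w j * ((b - c * q i) / (q j - q i)) := by
  have hD : 0 < q j - q i := sub_pos.2 hq
  have hdual : ∀ t ∈ s,
      w t ≤ (w j - w i) / (q j - q i) * q t + (w i * q j - w j * q i) / (q j - q i) := by
    intro t ht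
    rw [div_mul_eq_mul_div, ← add_div, le_div_iff₀ hD]
    linarith [hchord t ht]
  calc ∑ t ∈ s, w t * y t
      ≤ (w j - w i) / (q j - q i) * b + (w i * q j - w j * q i) / (q j - q i) * c :=
        sum_mul_le_of_le_mul_add (div_nonneg (sub_nonneg.2 hw) hD.le)
          (div_nonneg (sub_nonneg.2 hintercept) hD.le) hdual hy hqy hsum
    _ = w i * ((c * q j - b) / (q j - q i)) + w j * ((b - c * q i) / (q j - q i)) := by ring

theorem chord_le_of_convexOn {s : Set 𝕜} {f : 𝕜 → 𝕜} (hf : ConvexOn 𝕜 s f) {x y z : 𝕜}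
    (hx : x ∈ s) (hy : y ∈ s) (hz : z ∈ s) (hxy : x < y) (hout : z ≤ x ∨ y ≤ z) :
    (f y - f x) * (z - x) ≤ (f z - f x) * (y - x) := by
  rcases hout with hzx | hyz
  · rcases hzx.eq_or_lt with rfl | hzx
    · simp
    · have hslope := hf.secant_mono hx hz hy hzx.ne hxy.ne' (hzx.trans hxy).le
      rw [← neg_div_neg_eq, div_le_div_iff₀ (by linarith) (by linarith)] at hslope
      linarith
  · have hslope := hf.secant_mono hx hy hz hxy.ne' (hxy.trans_le hyz).ne' hyz
    rwa [div_le_div_iff₀ (by linarith) (by linarith)] at hslope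

end DualityAndChords

section Odds

theorem hasDerivAt_log_odds {u : ℝ} (hu0 : 0 < u) (hu1 : u < 1) :
    HasDerivAt (fun u => Real.log (u / (1 - u))) (u * (1 - u))⁻¹ u := by
  have hu : 1 - u ≠ 0 := (sub_pos.2 hu1).ne'
  have hodds := (hasDerivAt_id' u).fun_div ((hasDerivAt_id' u).const_sub 1) hu
  convert hodds.log (div_ne_zero hu0.ne' hu) using 1
  field_simp
  ring

theorem convexOn_log_odds :
    ConvexOn ℝ (Set.Ico (1 / 2) 1) (fun u : ℝ => Real.log (u / (1 - u))) := by
  have hderiv : ∀ u ∈ Set.Ico (1 / 2 : ℝ) 1,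
      HasDerivAt (fun u => Real.log (u / (1 - u))) (u * (1 - u))⁻¹ u :=
    fun u hu => hasDerivAt_log_odds (by linarith [hu.1]) hu.2
  refine MonotoneOn.convexOn_of_deriv (convex_Ico _ _)
    (fun u hu => (hderiv u hu).continuousAt.continuousWithinAt)
    (fun u hu => (hderiv u (interior_subset hu)).differentiableAt.differentiableWithinAt) ?_
  intro u hu v hv huv
  replace hu := interior_subset hu
  replace hv := interior_subset hv
  rw [(hderiv u hu).deriv, (hderiv v hv).deriv]
  have hpos : 0 < v * (1 - v) := mul_pos (by linarith [hv.1]) (by linarith [hv.2])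
  exact inv_anti₀ hpos (by nlinarith [hu.1, hv.1])

theorem convexOn_exp_comp {E : Type*} [AddCommMonoid E] [Module ℝ E] {s : Set E} {f : E → ℝ}
    (hf : ConvexOn ℝ s f) : ConvexOn ℝ s (fun x => Real.exp (f x)) :=
  ⟨hf.1, fun _ hx _ hy _ _ hc hd hcd => (Real.exp_le_exp.2 (hf.2 hx hy hc hd hcd)).trans
    (convexOn_exp.2 (Set.mem_univ _) (Set.mem_univ _) hc hd hcd)⟩

theorem convexOn_odds_rpow {α : ℝ} (hα : 0 ≤ α) :
    ConvexOn ℝ (Set.Ico (1 / 2) 1) (fun u : ℝ => (u / (1 - u)) ^ α) := by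
  refine (convexOn_exp_comp (convexOn_log_odds.smul hα)).congr fun u hu => ?_
  have hodds : 0 < u / (1 - u) := div_pos (by linarith [hu.1]) (by linarith [hu.2])
  simp only [smul_eq_mul, Real.rpow_def_of_pos hodds, mul_comm]

end Odds

/-- The coefficient `w_t = t / (t + 1)` of `y_t` in the objective of the caching LP. -/
noncomputable def objCoeff (t : ℕ) : ℝ := (t : ℝ) / ((t : ℝ) + 1)

theorem objCoeff_strictMono : StrictMono objCoeff := by
  intro s t hst
  have hst' : (s : ℝ) < t := by exact_mod_cast hst
  rw [objCoeff, objCoeff, div_lt_div_iff₀ (by positivity) (by positivity)]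
  linarith

theorem objCoeff_mem_Ico {t : ℕ} (ht : 1 ≤ t) : objCoeff t ∈ Set.Ico (1 / 2 : ℝ) 1 := by
  constructor
  · simpa [objCoeff, one_add_one_eq_two] using objCoeff_strictMono.monotone ht
  · rw [objCoeff, div_lt_one (by positivity)]
    exact lt_add_one _

theorem objCoeff_div_one_sub (t : ℕ) : objCoeff t / (1 - objCoeff t) = t := by
  rw [objCoeff]
  field_simp
  simp

theorem q_eq (K N : ℕ) (ρ α : ℝ) (t : ℕ) :
    q K N ρ α t = N * ρ / K * (t : ℝ) ^ α + (K + 1) / K * objCoeff t := by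
  rcases eq_or_ne (K : ℝ) 0 with hK | hK
  · simp [q, hK]
  · rw [q, cCost, objCoeff]
    field_simp

/-- The curve on which the points `(w_t, q_t)` lie, where `w_t = t / (t + 1)`: the variable `t` is
recovered from `u = w_t` as the odds `u / (1 - u)`. -/
noncomputable def qCurve (K N : ℕ) (ρ α u : ℝ) : ℝ :=
  N * ρ / K * (u / (1 - u)) ^ α + (K + 1) / K * u

theorem qCurve_objCoeff (K N : ℕ) (ρ α : ℝ) (t : ℕ) :
    qCurve K N ρ α (objCoeff t) = q K N ρ α t := by
  rw [qCurve, objCoeff_div_one_sub, q_eq]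

section CachingLP

variable {K N : ℕ} {ρ α : ℝ}

theorem convexOn_qCurve (hρ : 0 ≤ ρ) (hα : 0 ≤ α) :
    ConvexOn ℝ (Set.Ico (1 / 2) 1) (qCurve K N ρ α) :=
  ((convexOn_odds_rpow hα).smul (by positivity : 0 ≤ N * ρ / K)).add
    ((convexOn_id (convex_Ico _ _)).smul (by positivity : (0 : ℝ) ≤ (K + 1) / K))

theorem q_chord_le (hρ : 0 ≤ ρ) (hα : 0 ≤ α) {i j t : ℕ} (hi : 1 ≤ i) (hij : i < j) (ht : 1 ≤ t)
    (hout : t ≤ i ∨ j ≤ t) :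
    (q K N ρ α j - q K N ρ α i) * (objCoeff t - objCoeff i) ≤
      (q K N ρ α t - q K N ρ α i) * (objCoeff j - objCoeff i) := by
  simpa only [qCurve_objCoeff] using
    chord_le_of_convexOn (convexOn_qCurve (K := K) (N := N) hρ hα) (objCoeff_mem_Ico hi)
      (objCoeff_mem_Ico (hi.trans hij.le)) (objCoeff_mem_Ico ht) (objCoeff_strictMono hij)
      (hout.imp (objCoeff_strictMono.monotone ·) (objCoeff_strictMono.monotone ·))

theorem q_le_one_iff_le_gam {t : ℕ} (hK : 0 < K) (hN : 0 < N) (ht : 0 < t) :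
    q K N ρ α t ≤ 1 ↔ ρ ≤ gam K N α t := by
  rw [q, gam, cCost, div_le_one (by positivity), le_div_iff₀ (by positivity)]
  constructor <;> intro h <;> linarith

theorem gam_nonneg {t : ℕ} (htK : t ≤ K) : 0 ≤ gam K N α t :=
  div_nonneg (sub_nonneg.2 (by exact_mod_cast htK)) (by positivity)

theorem sigmaK_nonneg (K t : ℕ) : 0 ≤ sigmaK K t := by
  rw [sigmaK]
  split_ifs with ht htK
  · exact zero_le_one
  · exact le_rfl
  · have htpos : (0 : ℝ) < t := by exact_mod_cast Nat.pos_of_ne_zero ht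
    have hlog : 0 < Real.log ((t + 1) / t) :=
      Real.log_pos ((one_lt_div htpos).2 (lt_add_one _))
    have hratio : Real.log ((t + 2) / (t + 1)) ≤ Real.log ((t + 1) / t) := by
      apply Real.log_le_log (by positivity)
      rw [div_le_div_iff₀ (by positivity) htpos]
      linarith
    have hneg : Real.log ((t + 1) / (t + 2)) = -Real.log ((t + 2) / (t + 1)) := by
      rw [← Real.log_inv, inv_div]
    rw [one_add_div hlog.ne', hneg]
    exact div_nonneg (by linarith) hlog.le

theorem sigmaK_le_iff {t : ℕ} (ht : 0 < t) (htK : t < K) :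
    sigmaK K t ≤ α ↔
      objCoeff (t + 1) * (t : ℝ) ^ α ≤ objCoeff t * ((t + 1 : ℕ) : ℝ) ^ α := by
  have htpos : (0 : ℝ) < t := by exact_mod_cast ht
  have hlog : 0 < Real.log (t + 1) - Real.log t :=
    sub_pos.2 (Real.log_lt_log htpos (lt_add_one _))
  have htwo : (t : ℝ) + 1 + 1 = t + 2 := by ring
  have hlogs : objCoeff (t + 1) * (t : ℝ) ^ α ≤ objCoeff t * ((t + 1 : ℕ) : ℝ) ^ α ↔
      Real.log (t + 1) - Real.log (t + 2) + α * Real.log t ≤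
        Real.log t - Real.log (t + 1) + α * Real.log (t + 1) := by
    rw [objCoeff, objCoeff, Nat.cast_add_one, htwo,
      ← Real.log_le_log_iff (by positivity) (by positivity),
      Real.log_mul (by positivity) (by positivity), Real.log_mul (by positivity) (by positivity),
      Real.log_rpow htpos, Real.log_rpow (by positivity),
      Real.log_div (by positivity) (by positivity), Real.log_div htpos.ne' (by positivity)]
  rw [hlogs, sigmaK, if_neg ht.ne', if_neg htK.ne, Real.log_div (by positivity) (by positivity),
    Real.log_div (by positivity) htpos.ne', one_add_div hlog.ne', div_le_iff₀ hlog]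
  constructor <;> intro h <;> linarith

theorem objCoeff_succ_mul_q_le_of_sigmaK_le {t : ℕ} (hρ : 0 ≤ ρ) (ht : 0 < t) (htK : t < K)
    (hσ : sigmaK K t ≤ α) :
    objCoeff (t + 1) * q K N ρ α t ≤ objCoeff t * q K N ρ α (t + 1) := by
  have hA : 0 ≤ N * ρ / K := by positivity
  rw [q_eq, q_eq]
  linarith [mul_le_mul_of_nonneg_left ((sigmaK_le_iff ht htK).1 hσ) hA]

theorem pInter_nonneg {i j : ℕ} (hi : q K N ρ α i ≤ 1) (hj : 1 ≤ q K N ρ α j) (t : ℕ) :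
    0 ≤ pInter K N ρ α i j t := by
  rw [pInter]
  split_ifs
  · exact div_nonneg (by linarith) (by linarith)
  · exact div_nonneg (by linarith) (by linarith)
  · exact le_rfl

theorem sum_mul_pInter {i j : ℕ} (g : ℕ → ℝ) (hij : i ≠ j) (hi : i ∈ Finset.Icc 1 K)
    (hj : j ∈ Finset.Icc 1 K) :
    ∑ t ∈ Finset.Icc 1 K, g t * pInter K N ρ α i j t =
      g i * ((q K N ρ α j - 1) / (q K N ρ α j - q K N ρ α i)) +
        g j * ((1 - q K N ρ α i) / (q K N ρ α j - q K N ρ α i)) := by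
  rw [Finset.sum_eq_add_of_mem i j hi hj hij
    fun t _ ht => by rw [pInter, if_neg ht.1, if_neg ht.2, mul_zero]]
  simp [pInter, hij.symm]

theorem feasible_pInter {i j : ℕ} (hi : i ∈ Finset.Icc 1 K) (hj : j ∈ Finset.Icc 1 K)
    (hqi : q K N ρ α i ≤ 1) (hqj : 1 < q K N ρ α j) :
    Feasible K N ρ α (pInter K N ρ α i j) := by
  have hD : q K N ρ α j - q K N ρ α i ≠ 0 := by linarith
  have hij : i ≠ j := fun h => hD (by rw [h, sub_self])
  refine ⟨le_of_eq ?_, le_of_eq ?_, fun t _ => pInter_nonneg hqi hqj.le t⟩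
  · rw [sum_mul_pInter _ hij hi hj]
    field_simp
    ring
  · have hsum := sum_mul_pInter (N := N) (ρ := ρ) (α := α) (fun _ => 1) hij hi hj
    simp only [one_mul] at hsum
    rw [hsum]
    field_simp
    ring

theorem objF_le_objF_pInter {i j : ℕ} (hi : i ∈ Finset.Icc 1 K) (hj : j ∈ Finset.Icc 1 K)
    (hij : i < j) (hq : q K N ρ α i < q K N ρ α j)
    (hintercept : objCoeff j * q K N ρ α i ≤ objCoeff i * q K N ρ α j)
    (hchord : ∀ t ∈ Finset.Icc 1 K,
      (q K N ρ α j - q K N ρ α i) * (objCoeff t - objCoeff i) ≤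
        (q K N ρ α t - q K N ρ α i) * (objCoeff j - objCoeff i))
    {z : ℕ → ℝ} (hz : Feasible K N ρ α z) :
    objF K z ≤ objF K (pInter K N ρ α i j) := by
  have hbound := sum_mul_le_of_chord_le hq (objCoeff_strictMono hij).le hintercept hchord
    hz.2.2 hz.1 hz.2.1
  rw [one_mul, one_mul, ← sum_mul_pInter objCoeff hij.ne hi hj] at hbound
  exact hbound

end CachingLP

theorem architecture_limited_regime_intersection_optimal_general
    (K N : ℕ) (hN : 0 < N) (α ρ : ℝ) (a : ℕ) (ha : 1 ≤ a) (haK : a + 1 ≤ K)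
    (hγ₁ : gam K N α (a + 1) < ρ) (hγ₂ : ρ ≤ gam K N α a) (hσ : sigmaK K a ≤ α) :
    Feasible K N ρ α (pInter K N ρ α a (a + 1)) ∧
    (∀ z : ℕ → ℝ, Feasible K N ρ α z →
      objF K z ≤ objF K (pInter K N ρ α a (a + 1))) := by
  have hρ : 0 ≤ ρ := (gam_nonneg haK).trans hγ₁.le
  have hα : 0 ≤ α := (sigmaK_nonneg K a).trans hσ
  have hqa : q K N ρ α a ≤ 1 := (q_le_one_iff_le_gam (by omega) hN ha).2 hγ₂
  have hqb : 1 < q K N ρ α (a + 1) :=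
    lt_of_not_ge fun h => hγ₁.not_ge ((q_le_one_iff_le_gam (by omega) hN a.succ_pos).1 h)
  have hia : a ∈ Finset.Icc 1 K := Finset.mem_Icc.2 ⟨ha, by omega⟩
  have hib : a + 1 ∈ Finset.Icc 1 K := Finset.mem_Icc.2 ⟨by omega, haK⟩
  refine ⟨feasible_pInter hia hib hqa hqb, fun z hz => ?_⟩
  refine objF_le_objF_pInter hia hib a.lt_succ_self (hqa.trans_lt hqb)
    (objCoeff_succ_mul_q_le_of_sigmaK_le hρ ha haK hσ) (fun t ht => ?_) hz
  exact q_chord_le hρ hα ha a.lt_succ_self (Finset.mem_Icc.1 ht).1 (by omega)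

theorem architecture_limited_regime_intersection_optimal
    (K N : ℕ) (hK : 2 ≤ K) (hKN : K ≤ N) (α ρ : ℝ)
    (hα0 : 0 ≤ α) (hα1 : α ≤ 1) (hρ0 : 0 ≤ ρ) (hρ1 : ρ ≤ 1)
    (a : ℕ) (ha : 1 ≤ a) (haK : a + 1 ≤ K)
    (hγ₁ : gam K N α (a + 1) < ρ) (hγ₂ : ρ ≤ gam K N α a)
    (hσ : sigmaK K a ≤ α) :
    Feasible K N ρ α (pInter K N ρ α a (a + 1)) ∧
    (∀ z : ℕ → ℝ, Feasible K N ρ α z →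
      objF K z ≤ objF K (pInter K N ρ α a (a + 1))) :=
  architecture_limited_regime_intersection_optimal_general K N (by omega) α ρ a ha haK hγ₁ hγ₂ hσ
end

section
/- (Corollary: optimality of uncoded delivery) Suppose α ≤ σ_{K−1} = 1 + log(K/(K+1))/log(K/(K−1)). Then for every ρ ∈ [0,1] there exists an optimal solution of the caching LP supported only on coordinate K; namely, y* with y*_K = min(1, 1/q_K) and y*_t = 0 for all t < K is optimal, so uncoded delivery (caching type t = K) is optimal regardless of ρ. -/
/-- `σ_t = 1 + log((t+1)/(t+2)) / log((t+1)/t)`. -/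
noncomputable def sigma (t : ℕ) : ℝ :=
  1 + Real.log (((t : ℝ) + 1) / ((t : ℝ) + 2)) / Real.log (((t : ℝ) + 1) / (t : ℝ))

/-!
Write `w_t = t/(t+1)`. Each of the two constraints alone bounds the objective by weak duality:
`∑ y_t ≤ 1` gives `w_K`, because `w_t ≤ w_K`, and `∑ q_t y_t ≤ 1` gives `w_K/q_K`, provided that
`q_t/w_t` is smallest at `t = K`. The point supported on `K` attains the smaller of the two. Since
`q_t/w_t = (Nρ/K)·t^(α-1)·(t+1) + (K+1)/K`, the function `x^(α-1)·(x+1)` has to be smallest at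
`x = K` among `1, …, K`. Its logarithm is convex in `log x`, so it suffices that its value does not
increase from `K-1` to `K`, which is the condition `α ≤ σ_{K-1}`.
-/

open Finset Real

lemma sum_mul_le_mul_of_forall_le_mul {ι R : Type*} [CommSemiring R] [PartialOrder R]
    [IsOrderedRing R] {s : Finset ι} {w c z : ι → R} {r b : R} (hr : 0 ≤ r)
    (hz : ∀ i ∈ s, 0 ≤ z i) (hw : ∀ i ∈ s, w i ≤ r * c i) (hb : ∑ i ∈ s, c i * z i ≤ b) :
    ∑ i ∈ s, w i * z i ≤ r * b :=
  calc ∑ i ∈ s, w i * z i ≤ ∑ i ∈ s, r * c i * z i :=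
        sum_le_sum fun i hi => mul_le_mul_of_nonneg_right (hw i hi) (hz i hi)
    _ = r * ∑ i ∈ s, c i * z i := by simp only [mul_sum, mul_assoc]
    _ ≤ r * b := mul_le_mul_of_nonneg_left hb hr

lemma div_add_one_le_div_add_one {F : Type*} [Field F] [LinearOrder F] [IsStrictOrderedRing F]
    {a b : F} (ha : 0 ≤ a) (hab : a ≤ b) : a / (a + 1) ≤ b / (b + 1) := by
  rw [div_le_div_iff₀ (by linarith) (by linarith)]
  linarith

lemma convexOn_log_exp_add_one : ConvexOn ℝ Set.univ fun u => log (exp u + 1) := by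
  have hderiv (u : ℝ) : HasDerivAt (fun u => log (exp u + 1)) (sigmoid u) u := by
    refine (((hasDerivAt_exp u).add_const 1).log (by positivity)).congr_deriv ?_
    rw [sigmoid_def, exp_neg]
    field_simp
  refine Monotone.convexOn_univ_of_deriv (fun u => (hderiv u).differentiableAt) ?_
  rw [funext fun u => (hderiv u).deriv]
  exact sigmoid_monotone

lemma log_rpow_mul_add_one (β : ℝ) {x : ℝ} (hx : 0 < x) :
    log (x ^ β * (x + 1)) = β * log x + log (x + 1) := by
  rw [log_mul (by positivity) (by positivity), log_rpow hx]

lemma convexOn_log_exp_rpow_mul_add_one (β : ℝ) :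
    ConvexOn ℝ Set.univ fun u => log (exp u ^ β * (exp u + 1)) := by
  simp only [log_rpow_mul_add_one β (exp_pos _), log_exp]
  exact ((LinearMap.mulLeft ℝ β).convexOn convex_univ).add convexOn_log_exp_add_one

lemma rpow_mul_add_one_le_left_of_right_le {β a b c : ℝ} (ha : 0 < a) (hab : a ≤ b) (hbc : b < c)
    (h : c ^ β * (c + 1) ≤ b ^ β * (b + 1)) : b ^ β * (b + 1) ≤ a ^ β * (a + 1) := by
  have hb : 0 < b := ha.trans_le hab
  have hc : 0 < c := hb.trans hbc
  rw [← log_le_log_iff (by positivity) (by positivity)] at h ⊢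
  have hleft := (convexOn_log_exp_rpow_mul_add_one β).le_left_of_right_le'' (Set.mem_univ _)
    (Set.mem_univ _) (log_le_log ha hab) (log_lt_log hb hbc)
  simp only [exp_log ha, exp_log hb, exp_log hc] at hleft
  exact hleft h

lemma le_sigma_iff {t : ℕ} (ht : 0 < t) {α : ℝ} :
    α ≤ sigma t ↔
      ((t : ℝ) + 1) ^ (α - 1) * ((t : ℝ) + 1 + 1) ≤ (t : ℝ) ^ (α - 1) * ((t : ℝ) + 1) := by
  have ht0 : (0 : ℝ) < t := by exact_mod_cast ht
  have hlog : 0 < log (((t : ℝ) + 1) / t) := log_pos ((one_lt_div ht0).2 (by linarith))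
  calc α ≤ sigma t ↔ (α - 1) * log (((t : ℝ) + 1) / t) ≤ log (((t : ℝ) + 1) / (t + 2)) := by
        rw [sigma, ← sub_le_iff_le_add', le_div_iff₀ hlog]
    _ ↔ log (((t : ℝ) + 1) ^ (α - 1) * ((t : ℝ) + 1 + 1)) ≤
          log ((t : ℝ) ^ (α - 1) * ((t : ℝ) + 1)) := by
        rw [log_div (by positivity) ht0.ne', log_div (by positivity) (by positivity),
          log_rpow_mul_add_one _ (by positivity), log_rpow_mul_add_one _ ht0, add_assoc (t : ℝ) 1 1,
          one_add_one_eq_two]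
        constructor <;> intro h <;> linarith
    _ ↔ _ := log_le_log_iff (by positivity) (by positivity)

lemma sigma_sub_one {K : ℕ} (hK : 0 < K) :
    sigma (K - 1) = 1 + log ((K : ℝ) / ((K : ℝ) + 1)) / log ((K : ℝ) / ((K : ℝ) - 1)) := by
  rw [sigma, Nat.cast_pred hK]
  ring_nf

lemma rpow_sub_one_mul_add_one_le_of_le_sigma {K t : ℕ} {α : ℝ} (ht : 0 < t) (htK : t ≤ K)
    (hα : α ≤ sigma (K - 1)) :
    (K : ℝ) ^ (α - 1) * ((K : ℝ) + 1) ≤ (t : ℝ) ^ (α - 1) * ((t : ℝ) + 1) := by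
  obtain rfl | htK := htK.eq_or_lt
  · exact le_rfl
  obtain ⟨n, rfl⟩ : ∃ n, K = n + 1 := ⟨K - 1, by omega⟩
  rw [Nat.add_sub_cancel, le_sigma_iff (by omega)] at hα
  have htn : (t : ℝ) ≤ n := by exact_mod_cast Nat.lt_succ_iff.1 htK
  push_cast
  exact hα.trans (rpow_mul_add_one_le_left_of_right_le (by exact_mod_cast ht) htn (by linarith) hα)

section CachingLP

variable {K N t : ℕ} {ρ α : ℝ}

lemma q_eq_div_add_one_mul (ht : 0 < t) :
    q K N ρ α t = (t : ℝ) / (t + 1) *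
      (N * ρ / K * ((t : ℝ) ^ (α - 1) * ((t : ℝ) + 1)) + (K + 1) / K) := by
  have ht0 : (0 : ℝ) < t := by exact_mod_cast ht
  rw [q, cCost, rpow_sub_one ht0.ne']
  field_simp

lemma q_pos (hK : 0 < K) (ht : 0 < t) (hρ : 0 ≤ ρ) : 0 < q K N ρ α t := by
  rw [q_eq_div_add_one_mul ht]
  positivity

lemma div_add_one_mul_q_le (ht : 0 < t) (htK : t ≤ K) (hρ : 0 ≤ ρ) (hα : α ≤ sigma (K - 1)) :
    (t : ℝ) / (t + 1) * q K N ρ α K ≤ (K : ℝ) / (K + 1) * q K N ρ α t := by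
  have hK : 0 < K := ht.trans_le htK
  have hratio := rpow_sub_one_mul_add_one_le_of_le_sigma ht htK hα
  rw [q_eq_div_add_one_mul hK, q_eq_div_add_one_mul ht, mul_left_comm]
  gcongr _ * (_ * (_ * ?_ + _))

lemma feasible_ite_eq {m : ℝ} (hK : 1 ≤ K) (hm0 : 0 ≤ m) (hm1 : m ≤ 1)
    (hqm : q K N ρ α K * m ≤ 1) : Feasible K N ρ α fun t => if t = K then m else 0 :=
  ⟨by simpa [hK] using hqm, by simpa [hK] using hm1, fun t _ => by positivity⟩

lemma objF_ite_eq (hK : 1 ≤ K) (m : ℝ) :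
    objF K (fun t => if t = K then m else 0) = (K : ℝ) / (K + 1) * m := by
  simp [objF, hK]

lemma objF_le_div_add_one {z : ℕ → ℝ} (hz : Feasible K N ρ α z) :
    objF K z ≤ (K : ℝ) / (K + 1) := by
  obtain ⟨-, hsum, hnonneg⟩ := hz
  rw [← mul_one ((K : ℝ) / (K + 1))]
  refine sum_mul_le_mul_of_forall_le_mul (c := fun _ => 1) (by positivity) hnonneg
    (fun t ht => ?_) (by simpa only [one_mul] using hsum)
  rw [mul_one]
  exact div_add_one_le_div_add_one t.cast_nonneg (Nat.cast_le.2 (mem_Icc.1 ht).2)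

lemma objF_le_div_add_one_div_q (hK : 0 < K) (hρ : 0 ≤ ρ) (hα : α ≤ sigma (K - 1)) {z : ℕ → ℝ}
    (hz : Feasible K N ρ α z) : objF K z ≤ (K : ℝ) / (K + 1) / q K N ρ α K := by
  obtain ⟨hqsum, -, hnonneg⟩ := hz
  have hq : 0 < q K N ρ α K := q_pos hK hK hρ
  rw [← mul_one ((K : ℝ) / (K + 1) / q K N ρ α K)]
  refine sum_mul_le_mul_of_forall_le_mul (by positivity) hnonneg (fun t ht => ?_) hqsum
  obtain ⟨ht, htK⟩ := mem_Icc.1 ht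
  rw [div_mul_eq_mul_div, le_div_iff₀ hq]
  exact div_add_one_mul_q_le ht htK hρ hα

end CachingLP

theorem uncoded_delivery_optimal_for_small_alpha_general {K : ℕ} (N : ℕ) (hK : 2 ≤ K) {α ρ : ℝ}
    (hρ : 0 ≤ ρ) (hα : α ≤ sigma (K - 1)) :
    Feasible K N ρ α (fun t => if t = K then min 1 (1 / q K N ρ α K) else 0) ∧
    (∀ z : ℕ → ℝ, Feasible K N ρ α z →
      objF K z ≤ objF K (fun t => if t = K then min 1 (1 / q K N ρ α K) else 0)) := by
  have hK0 : 0 < K := by omega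
  have hq : 0 < q K N ρ α K := q_pos hK0 hK0 hρ
  refine ⟨feasible_ite_eq hK0 (by positivity) (min_le_left _ _) ?_, fun z hz => ?_⟩
  · rw [mul_comm, ← le_div_iff₀ hq]
    exact min_le_right _ _
  · rw [objF_ite_eq hK0, mul_min_of_nonneg _ _ (by positivity), mul_one, mul_one_div]
    exact le_min (objF_le_div_add_one hz) (objF_le_div_add_one_div_q hK0 hρ hα hz)

theorem uncoded_delivery_optimal_for_small_alpha
    (K N : ℕ) (hK : 2 ≤ K) (hKN : K ≤ N) (α ρ : ℝ)
    (hα0 : 0 ≤ α) (hα1 : α ≤ 1) (hρ0 : 0 ≤ ρ) (hρ1 : ρ ≤ 1)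
    (hα : α ≤ sigma (K - 1)) :
    sigma (K - 1) = 1 + Real.log ((K : ℝ) / ((K : ℝ) + 1)) /
        Real.log ((K : ℝ) / ((K : ℝ) - 1)) ∧
    Feasible K N ρ α (fun t => if t = K then min 1 (1 / q K N ρ α K) else 0) ∧
    (∀ z : ℕ → ℝ, Feasible K N ρ α z →
      objF K z ≤ objF K (fun t => if t = K then min 1 (1 / q K N ρ α K) else 0)) :=
  ⟨sigma_sub_one (by omega), uncoded_delivery_optimal_for_small_alpha_general N hK hρ0 hα⟩
end
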